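/- Assume |A| − |B| = 1. Fix i ∈ A and o_i ∈ ℝ. If there exists a stable alternating spanning tree generating offer profile O with O_i = o_i, then O is the unique stable alternating spanning tree generating offer profile with O_i = o_i. -/

import Mathlib

open Classical

variable {V : Type*}

namespace GSM

/-- Symmetric adjacency induced by a set of (directed A→B) edges. -/
def Adj (E : Finset (V × V)) (a b : V) : Prop := (a, b) ∈ E ∨ (b, a) ∈ E

/-- A path from `k` to `k'`: a nonempty list of distinct nodes starting at `k`,
ending at `k'`, with consecutive nodes adjacent. -/
def IsPath (E : Finset (V × V)) (p : List V) (k k' : V) : Prop :=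
  p.head? = some k ∧ p.getLast? = some k' ∧ p.Nodup ∧ p.Chain' (Adj E)

/-- The offer induced at the end of a path, starting from offer `x` at its head:
`O_{x_0} = x` and `O_{x_{n+1}} = v_{x_{n+1}}(x_n, O_{x_n})`. -/
def pathOffer (v : V → V → ℝ → ℝ) : List V → ℝ → ℝ
  | [], x => x
  | [_], x => x
  | a :: b :: rest, x => pathOffer v (b :: rest) (v b a x)

/-- The equality subgraph of an offer profile: edges `(i,j) ∈ E` with `O j = v j i (O i)`. -/
noncomputable def EQg (E : Finset (V × V)) (v : V → V → ℝ → ℝ) (O : V → ℝ) : Finset (V × V) :=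
  E.filter fun e => O e.2 = v e.2 e.1 (O e.1)

/-- Stability of an offer profile: for every edge `(i,j) ∈ E`, `O j ≥ v j i (O i)`. -/
def Stable (E : Finset (V × V)) (v : V → V → ℝ → ℝ) (O : V → ℝ) : Prop :=
  ∀ e ∈ E, v e.2 e.1 (O e.1) ≤ O e.2

/-- A matching: no two distinct edges share a node. -/
def IsMatching (M : Finset (V × V)) : Prop :=
  ∀ e ∈ M, ∀ e' ∈ M, e ≠ e' → e.1 ≠ e'.1 ∧ e.1 ≠ e'.2 ∧ e.2 ≠ e'.1 ∧ e.2 ≠ e'.2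

/-- A node is matched if it lies on an edge of the matching. -/
def Matched (M : Finset (V × V)) (x : V) : Prop := ∃ e ∈ M, e.1 = x ∨ e.2 = x

/-- A near-perfect matching relative to the node set `X`: exactly one node of `X` is unmatched. -/
def NearPerfect (M : Finset (V × V)) (X : Finset V) : Prop :=
  ∃! x, x ∈ X ∧ ¬ Matched M x

/-- Undirected membership of an edge in an edge set. -/
def SymMem (M : Finset (V × V)) (e : V × V) : Prop := e ∈ M ∨ e.swap ∈ M

/-- A list of nodes is alternating for the matching `M`: consecutive edges alternate
between edges of `M` and non-edges of `M`. -/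
def IsAlternating (M : Finset (V × V)) (p : List V) : Prop :=
  List.Chain' (fun e e' => SymMem M e ↔ ¬ SymMem M e') (p.zip p.tail)

/-- `T` is a tree on the node set `X`: all its edges join nodes of `X` and any two
nodes of `X` are joined by a unique path in `T`. -/
def IsTreeOn (T : Finset (V × V)) (X : Finset V) : Prop :=
  (∀ e ∈ T, e.1 ∈ X ∧ e.2 ∈ X) ∧ ∀ x ∈ X, ∀ y ∈ X, ∃! p : List V, IsPath T p x y

/-- Degree of a node: number of incident edges of `T`. -/
noncomputable def degr (T : Finset (V × V)) (x : V) : ℕ :=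
  (T.filter fun e => e.1 = x ∨ e.2 = x).card

/-- An alternating tree on node set `X` for the matching `M`, rooted at `r`:
a tree containing exactly one unmatched node `r`, in which every path from `r`
is an alternating path, every node at odd distance from `r` has degree 2, and
every leaf is at even distance from `r`. -/
def IsAltTreeOn (T M : Finset (V × V)) (r : V) (X : Finset V) : Prop :=
  IsTreeOn T X ∧ r ∈ X ∧ ¬ Matched M r ∧ (∀ x ∈ X, x ≠ r → Matched M x) ∧
  (∀ x ∈ X, ∀ p : List V, IsPath T p r x → IsAlternating M p) ∧
  (∀ x ∈ X, ∀ p : List V, IsPath T p r x →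
    (Odd (p.length - 1) → degr T x = 2) ∧ (degr T x = 1 → Even (p.length - 1)))

/-- A stable alternating spanning tree generating offer profile: a stable offer profile
whose equality subgraph contains a near-perfect matching together with an associated
alternating spanning tree. -/
def SASTG (A B : Finset V) (E : Finset (V × V)) (v : V → V → ℝ → ℝ) (O : V → ℝ) : Prop :=
  Stable E v O ∧
  ∃ M T r, IsMatching M ∧ M ⊆ EQg E v O ∧ NearPerfect M (A ∪ B) ∧
    T ⊆ EQg E v O ∧ IsAltTreeOn T M r (A ∪ B)

/-- `y` is a child of `x` in the tree `T` rooted at `r`: there is a path from `r`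
to `y` in `T` whose second-to-last node is `x`. -/
def IsChild (T : Finset (V × V)) (r x y : V) : Prop :=
  ∃ p : List V, IsPath T p r y ∧ p.dropLast.getLast? = some x

/-- A node reachable by an alternating path from some unmatched node of `A`. -/
def AltReach (G M : Finset (V × V)) (A : Finset V) (x : V) : Prop :=
  ∃ i ∈ A, ¬ Matched M i ∧ ∃ p : List V, IsPath G p i x ∧ IsAlternating M p

/-!
Write `Γ_O(S)` for the neighbourhood of `S ⊆ B` in the equality subgraph of `O`. If `O` generates
an alternating spanning tree and `|B| < |A|`, then `|S| < |Γ_O(S)|` for every nonempty `S ⊆ B`: the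
root of the tree lies in `A`, so along the tree every node of `S` is reached by an alternating path
from an unmatched node of `A`; such a path cannot enter `S` unless some edge joins `S` to a node of
`A` that is not matched into `S`, and this node belongs to `Γ_O(S)` in addition to the `|S|`
partners of `S`.

Given two such profiles `O` and `O'`, stability of `O'` and strict monotonicity give
`Γ_O {O' ≤ O} ⊆ {O ≤ O'}` and, symmetrically, `Γ_{O'} {O < O'} ⊆ {O' < O}`. If `O i ≤ O' i` for one
`i ∈ A` and `|A| ≤ |B| + 1`, adding up the two cardinality bounds leaves room only for
`O ≤ O'` on all of `A` and `O' ≤ O` on all of `B`. If `O i = O' i`, this applies both ways.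
-/

/-- The neighbourhood `Γ(S)` of a set `S` of second endpoints: the first endpoints of the edges of
`G` that end in `S`. For a matching, this is the set of partners of the nodes of `S`. -/
noncomputable def leftNbrs (G : Finset (V × V)) (S : Finset V) : Finset V :=
  (G.filter fun e => e.2 ∈ S).image Prod.fst

/-- Positive surplus over `B`, the strict form of Hall's condition: every nonempty set of nodes of
`B` has more neighbours than elements. -/
def HasPositiveSurplus (G : Finset (V × V)) (B : Finset V) : Prop :=
  ∀ S ⊆ B, S.Nonempty → S.card < (leftNbrs G S).card

/-- One step in the residual digraph of the matching `M`: an edge of `G` from its first to its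
second endpoint, or an edge of `M` backwards. Forward steps along `M` are allowed too, which only
enlarges reachability. -/
def ResidualStep (G M : Finset (V × V)) (x y : V) : Prop := (x, y) ∈ G ∨ (y, x) ∈ M

theorem mem_leftNbrs {G : Finset (V × V)} {S : Finset V} {a : V} :
    a ∈ leftNbrs G S ↔ ∃ b ∈ S, (a, b) ∈ G := by
  simp only [leftNbrs, Finset.mem_image, Finset.mem_filter, Prod.exists]
  grind

theorem leftNbrs_mono {M G : Finset (V × V)} (h : M ⊆ G) (S : Finset V) :
    leftNbrs M S ⊆ leftNbrs G S :=
  Finset.image_subset_image (Finset.filter_subset_filter _ h)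

theorem IsPath.mono {T G : Finset (V × V)} (hTG : T ⊆ G) {p : List V} {x y : V}
    (hp : IsPath T p x y) : IsPath G p x y :=
  ⟨hp.1, hp.2.1, hp.2.2.1, hp.2.2.2.imp fun _ _ h => h.imp (@hTG _) (@hTG _)⟩

section Matching

variable {M : Finset (V × V)}

theorem IsMatching.injOn_fst (hM : IsMatching M) : Set.InjOn Prod.fst (M : Set (V × V)) :=
  fun e he e' he' h => by_contra fun hne => (hM e he e' he' hne).1 h

theorem IsMatching.injOn_snd (hM : IsMatching M) : Set.InjOn Prod.snd (M : Set (V × V)) :=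
  fun e he e' he' h => by_contra fun hne => (hM e he e' he' hne).2.2.2 h

theorem matched_of_symMem {x y : V} (h : SymMem M (x, y)) : Matched M x :=
  h.elim (fun h => ⟨_, h, .inl rfl⟩) (fun h => ⟨_, h, .inr rfl⟩)

theorem IsMatching.card_le_card_leftNbrs (hM : IsMatching M) {S : Finset V}
    (hS : ∀ b ∈ S, ∃ a, (a, b) ∈ M) : S.card ≤ (leftNbrs M S).card := by
  have hsub : S ⊆ (M.filter fun e => e.2 ∈ S).image Prod.snd := fun b hb =>
    let ⟨a, hab⟩ := hS b hb
    Finset.mem_image.mpr ⟨(a, b), Finset.mem_filter.mpr ⟨hab, hb⟩, rfl⟩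
  calc S.card ≤ (M.filter fun e => e.2 ∈ S).card :=
        (Finset.card_le_card hsub).trans Finset.card_image_le
    _ = (leftNbrs M S).card :=
        (Finset.card_image_of_injOn
          (hM.injOn_fst.mono (Finset.coe_subset.mpr (Finset.filter_subset _ _)))).symm

end Matching

section Bipartite

variable {A B : Finset V} {G M : Finset (V × V)}

theorem Matched.exists_snd (hdisj : Disjoint A B) (hM : M ⊆ A ×ˢ B) {a : V} (ha : a ∈ A)
    (h : Matched M a) : ∃ b, (a, b) ∈ M := by
  obtain ⟨⟨x, y⟩, he, rfl | rfl⟩ := h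
  · exact ⟨y, he⟩
  · exact (Finset.disjoint_left.mp hdisj ha (Finset.mem_product.mp (hM he)).2).elim

theorem Matched.exists_fst (hdisj : Disjoint A B) (hM : M ⊆ A ×ˢ B) {b : V} (hb : b ∈ B)
    (h : Matched M b) : ∃ a, (a, b) ∈ M := by
  obtain ⟨⟨x, y⟩, he, rfl | rfl⟩ := h
  · exact (Finset.disjoint_left.mp hdisj (Finset.mem_product.mp (hM he)).1 hb).elim
  · exact ⟨x, he⟩

theorem IsMatching.exists_mem_not_matched (hMm : IsMatching M) (hdisj : Disjoint A B)
    (hM : M ⊆ A ×ˢ B) (hcard : B.card < A.card) : ∃ a ∈ A, ¬ Matched M a := by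
  by_contra! hall
  have hA : A ⊆ M.image Prod.fst := fun a ha =>
    let ⟨b, hab⟩ := (hall a ha).exists_snd hdisj hM ha
    Finset.mem_image_of_mem Prod.fst hab
  have hB : M.image Prod.snd ⊆ B :=
    Finset.image_subset_iff.mpr fun e he => (Finset.mem_product.mp (hM he)).2
  refine hcard.not_ge ?_
  calc A.card ≤ M.card := (Finset.card_le_card hA).trans Finset.card_image_le
    _ = (M.image Prod.snd).card := (Finset.card_image_of_injOn hMm.injOn_snd).symm
    _ ≤ B.card := Finset.card_le_card hB

theorem mem_right_iff_of_adj (hdisj : Disjoint A B) (hG : G ⊆ A ×ˢ B) {x y : V}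
    (h : Adj G x y) : y ∈ B ↔ x ∉ B := by
  rcases h with h | h <;> obtain ⟨ha, hb⟩ := Finset.mem_product.mp (hG h)
  · exact iff_of_true hb (Finset.disjoint_left.mp hdisj ha)
  · exact iff_of_false (Finset.disjoint_left.mp hdisj ha) (not_not.mpr hb)

theorem residualStep_of_adj (hG : G ⊆ A ×ˢ B) (hMG : M ⊆ G) {x y : V}
    (hadj : Adj G x y) (hM : x ∈ B → SymMem M (x, y)) : ResidualStep G M x y := by
  rcases hadj with h | h
  · exact .inl h
  · exact (hM (Finset.mem_product.mp (hG h)).2).imp (fun h => hMG h) id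

-- The matching edges of the path are exactly those that leave a node of `B`; alternation
-- propagates this from the first edge to all others.
theorem IsAlternating.isChain_residualStep (hdisj : Disjoint A B) (hG : G ⊆ A ×ˢ B)
    (hMG : M ⊆ G) {x : V} {l : List V} (hchain : (x :: l).IsChain (Adj G))
    (halt : IsAlternating M (x :: l)) (hfirst : ∀ y ∈ l.head?, SymMem M (x, y) ↔ x ∈ B) :
    (x :: l).IsChain (ResidualStep G M) := by
  induction l generalizing x with
  | nil => exact .singleton x
  | cons y l ih =>
    have hxy : SymMem M (x, y) ↔ x ∈ B := hfirst y rfl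
    obtain ⟨hadj, hchain⟩ := List.isChain_cons_cons.mp hchain
    refine .cons_cons (residualStep_of_adj hG hMG hadj hxy.mpr)
      (ih hchain (List.IsChain.tail halt) fun z hz => ?_)
    obtain ⟨l, rfl⟩ := List.head?_eq_some_iff.mp hz
    have hxyz : SymMem M (x, y) ↔ ¬ SymMem M (y, z) := (List.isChain_cons_cons.mp halt).1
    rw [mem_right_iff_of_adj hdisj hG hadj, ← hxy, hxyz, not_not]

theorem AltReach.exists_reflTransGen_residualStep (hdisj : Disjoint A B) (hG : G ⊆ A ×ˢ B)
    (hMG : M ⊆ G) {x : V} (h : AltReach G M A x) :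
    ∃ r, ¬ Matched M r ∧ Relation.ReflTransGen (ResidualStep G M) r x := by
  obtain ⟨r, hrA, hr, p, ⟨hhead, hlast, -, hchain⟩, halt⟩ := h
  obtain ⟨l, rfl⟩ := List.head?_eq_some_iff.mp hhead
  have hsteps := halt.isChain_residualStep hdisj hG hMG hchain fun y _ =>
    iff_of_false (fun h => hr (matched_of_symMem h)) (Finset.disjoint_left.mp hdisj hrA)
  exact ⟨r, hr, List.relationReflTransGen_of_exists_isChain_cons l hsteps
    (Option.some_injective _ ((List.getLast?_eq_some_getLast _).symm.trans hlast))⟩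

-- If every neighbour of `S` were matched into `S`, then `S` together with its partners would be
-- closed under residual predecessors, and it contains no unmatched node.
theorem AltReach.not_leftNbrs_subset (hMm : IsMatching M) (hdisj : Disjoint A B)
    (hG : G ⊆ A ×ˢ B) (hMG : M ⊆ G) {S : Finset V} (hSB : S ⊆ B)
    (hS : ∀ b ∈ S, Matched M b) {s : V} (hs : s ∈ S) (hreach : AltReach G M A s) :
    ¬ leftNbrs G S ⊆ leftNbrs M S := by
  intro hsub
  obtain ⟨r, hr, hrs⟩ := hreach.exists_reflTransGen_residualStep hdisj hG hMG
  have hclosed : ∀ {x y}, ResidualStep G M x y →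
      y ∈ S ∨ y ∈ leftNbrs M S → x ∈ S ∨ x ∈ leftNbrs M S := by
    rintro x y (hxy | hyx) (hy | hy)
    · exact .inr (hsub (mem_leftNbrs.mpr ⟨y, hy, hxy⟩))
    · obtain ⟨b, -, hyb⟩ := mem_leftNbrs.mp hy
      exact (Finset.disjoint_left.mp hdisj (Finset.mem_product.mp (hG (hMG hyb))).1
        (Finset.mem_product.mp (hG hxy)).2).elim
    · exact (Finset.disjoint_left.mp hdisj (Finset.mem_product.mp (hG (hMG hyx))).1
        (hSB hy)).elim
    · obtain ⟨b, hb, hyb⟩ := mem_leftNbrs.mp hy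
      have hbx : b = x := congrArg Prod.snd (hMm.injOn_fst hyb hyx rfl)
      exact .inl (hbx ▸ hb)
  have hrS : r ∈ S ∨ r ∈ leftNbrs M S :=
    hrs.head_induction_on (motive := fun x _ => x ∈ S ∨ x ∈ leftNbrs M S)
      (.inl hs) fun hxy _ hy => hclosed hxy hy
  rcases hrS with h | h
  · exact hr (hS r h)
  · obtain ⟨b, -, hrb⟩ := mem_leftNbrs.mp h
    exact hr ⟨_, hrb, .inl rfl⟩

theorem hasPositiveSurplus_of_altReach (hMm : IsMatching M) (hdisj : Disjoint A B)
    (hG : G ⊆ A ×ˢ B) (hMG : M ⊆ G) (hmatched : ∀ b ∈ B, Matched M b)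
    (hreach : ∀ b ∈ B, AltReach G M A b) : HasPositiveSurplus G B := by
  rintro S hSB ⟨s, hs⟩
  have hS : ∀ b ∈ S, Matched M b := fun b hb => hmatched b (hSB hb)
  calc S.card ≤ (leftNbrs M S).card := hMm.card_le_card_leftNbrs fun b hb =>
        (hS b hb).exists_fst hdisj (hMG.trans hG) (hSB hb)
    _ < (leftNbrs G S).card := Finset.card_lt_card ⟨leftNbrs_mono hMG S,
        (hreach s (hSB hs)).not_leftNbrs_subset hMm hdisj hG hMG hSB hS hs⟩

theorem HasPositiveSurplus.card_filter_lt (hG : HasPositiveSurplus G B)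
    (hGA : G ⊆ A ×ˢ B) {P Q : V → Prop} [DecidablePred P] [DecidablePred Q]
    (hPQ : ∀ e ∈ G, P e.2 → Q e.1) (hP : (B.filter P).Nonempty) :
    (B.filter P).card < (A.filter Q).card := by
  refine (hG _ (Finset.filter_subset _ _) hP).trans_le (Finset.card_le_card fun a ha => ?_)
  obtain ⟨b, hb, hab⟩ := mem_leftNbrs.mp ha
  exact Finset.mem_filter.mpr
    ⟨(Finset.mem_product.mp (hGA hab)).1, hPQ _ hab (Finset.mem_filter.mp hb).2⟩

end Bipartite

section OfferProfile

variable {A B : Finset V} {E : Finset (V × V)} {v : V → V → ℝ → ℝ} {O O' : V → ℝ}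

theorem SASTG.hasPositiveSurplus (hdisj : Disjoint A B) (hE : E ⊆ A ×ˢ B)
    (hcard : B.card < A.card) (hO : SASTG A B E v O) : HasPositiveSurplus (EQg E v O) B := by
  obtain ⟨-, M, T, r, hMm, hMG, -, hTG, ⟨-, hpath⟩, hrX, hr, hmatched, halt, -⟩ := hO
  have hG : EQg E v O ⊆ A ×ˢ B := (Finset.filter_subset _ _).trans hE
  have hrA : r ∈ A := by
    obtain ⟨a, haA, ha⟩ := hMm.exists_mem_not_matched hdisj (hMG.trans hG) hcard
    rwa [← not_imp_comm.mp (hmatched a (Finset.mem_union_left B haA)) ha]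
  refine hasPositiveSurplus_of_altReach hMm hdisj hG hMG (fun b hb => ?_) (fun b hb => ?_)
  · exact hmatched b (Finset.mem_union_right A hb)
      fun h => Finset.disjoint_left.mp hdisj hrA (h ▸ hb)
  · have hbX : b ∈ A ∪ B := Finset.mem_union_right A hb
    obtain ⟨p, hp, -⟩ := hpath r hrX b hbX
    exact ⟨r, hrA, hr, p, hp.mono hTG, halt b hbX p hp⟩

theorem le_fst_of_snd_le (hv : ∀ e ∈ E, StrictAnti (v e.2 e.1)) (hO' : Stable E v O')
    {e : V × V} (he : e ∈ EQg E v O) (h : O' e.2 ≤ O e.2) : O e.1 ≤ O' e.1 := by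
  obtain ⟨heE, heq⟩ := Finset.mem_filter.mp he
  exact (hv e heE).le_iff_ge.mp (((hO' e heE).trans h).trans_eq heq)

theorem lt_fst_of_snd_lt (hv : ∀ e ∈ E, StrictAnti (v e.2 e.1)) (hO' : Stable E v O')
    {e : V × V} (he : e ∈ EQg E v O) (h : O' e.2 < O e.2) : O e.1 < O' e.1 := by
  obtain ⟨heE, heq⟩ := Finset.mem_filter.mp he
  exact (hv e heE).lt_iff_gt.mp (((hO' e heE).trans_lt h).trans_eq heq)

theorem forall_le_of_hasPositiveSurplus (hE : E ⊆ A ×ˢ B)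
    (hv : ∀ e ∈ E, StrictAnti (v e.2 e.1)) (hcard : A.card ≤ B.card + 1)
    (hO : Stable E v O) (hO' : Stable E v O')
    (hsurp : HasPositiveSurplus (EQg E v O) B) (hsurp' : HasPositiveSurplus (EQg E v O') B)
    {i : V} (hi : i ∈ A) (hle : O i ≤ O' i) :
    (∀ a ∈ A, O a ≤ O' a) ∧ ∀ b ∈ B, O' b ≤ O b := by
  have hEQ : ∀ P, EQg E v P ⊆ A ×ˢ B := fun _ => (Finset.filter_subset _ _).trans hE
  have hle_card := hsurp.card_filter_lt (hEQ O) (P := fun b => O' b ≤ O b)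
    (Q := fun a => O a ≤ O' a) fun e he => le_fst_of_snd_le hv hO' he
  have hlt_card := hsurp'.card_filter_lt (hEQ O') (P := fun b => ¬ O' b ≤ O b)
    (Q := fun a => ¬ O a ≤ O' a) fun e he h =>
      not_le.mpr (lt_fst_of_snd_lt hv hO he (not_le.mp h))
  have hi_card : 0 < (A.filter fun a => O a ≤ O' a).card :=
    Finset.card_pos.mpr ⟨i, Finset.mem_filter.mpr ⟨hi, hle⟩⟩
  have hA_card := Finset.card_filter_add_card_filter_not (s := A) fun a => O a ≤ O' a
  have hB_card := Finset.card_filter_add_card_filter_not (s := B) fun b => O' b ≤ O b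
  rw [← Finset.card_pos] at hle_card hlt_card
  have hA_gt : (A.filter fun a => ¬ O a ≤ O' a).card = 0 := by omega
  have hB_gt : (B.filter fun b => ¬ O' b ≤ O b).card = 0 := by omega
  rw [Finset.card_eq_zero, Finset.filter_eq_empty_iff] at hA_gt hB_gt
  exact ⟨fun a ha => not_not.mp (hA_gt ha), fun b hb => not_not.mp (hB_gt hb)⟩

end OfferProfile

theorem sastg_unique_general {A B : Finset V} {E : Finset (V × V)} (hdisj : Disjoint A B)
    (hE : E ⊆ A ×ˢ B) {v : V → V → ℝ → ℝ} (hv : ∀ e ∈ E, StrictAnti (v e.2 e.1))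
    (hcard : A.card = B.card + 1) {i : V} (hi : i ∈ A) {O O' : V → ℝ}
    (hO : SASTG A B E v O) (hO' : SASTG A B E v O') (hOi : O' i = O i) :
    Set.EqOn O' O (A ∪ B) := by
  have hsurp := hO.hasPositiveSurplus hdisj hE (by omega)
  have hsurp' := hO'.hasPositiveSurplus hdisj hE (by omega)
  obtain ⟨hA, hB⟩ := forall_le_of_hasPositiveSurplus hE hv hcard.le hO.1 hO'.1 hsurp hsurp'
    hi hOi.ge
  obtain ⟨hA', hB'⟩ := forall_le_of_hasPositiveSurplus hE hv hcard.le hO'.1 hO.1 hsurp' hsurp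
    hi hOi.le
  rintro x (hx | hx)
  · exact le_antisymm (hA' x hx) (hA x hx)
  · exact le_antisymm (hB x hx) (hB' x hx)

/-- when `|A| = |B| + 1`, a stable alternating spanning tree generating offer
profile is uniquely determined by its value at any fixed node `i ∈ A`. -/
theorem sastg_unique [Fintype V] [DecidableEq V]
    (A B : Finset V) (E : Finset (V × V))
    (hdisj : Disjoint A B) (hA : A.Nonempty) (hB : B.Nonempty)
    (hE : E ⊆ A ×ˢ B)
    (hconn : ∀ x ∈ A ∪ B, ∀ y ∈ A ∪ B, ∃ p : List V, IsPath E p x y)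
    (v : V → V → ℝ → ℝ)
    (hvC : ∀ e ∈ E, Continuous (v e.2 e.1) ∧ Continuous (v e.1 e.2))
    (hvA : ∀ e ∈ E, StrictAnti (v e.2 e.1) ∧ StrictAnti (v e.1 e.2))
    (hvInv : ∀ e ∈ E, (∀ x, v e.1 e.2 (v e.2 e.1 x) = x) ∧ (∀ x, v e.2 e.1 (v e.1 e.2 x) = x))
    (hcard : A.card = B.card + 1)
    (i : V) (hi : i ∈ A) (oi : ℝ)
    (O : V → ℝ) (hO : SASTG A B E v O) (hOi : O i = oi) :
    ∀ O' : V → ℝ, SASTG A B E v O' → O' i = oi → ∀ x ∈ A ∪ B, O' x = O x :=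
  fun _ hO' hOi' _ hx => sastg_unique_general hdisj hE (fun e he => (hvA e he).1) hcard hi hO hO'
    (hOi'.trans hOi.symm) (Finset.mem_union.mp hx)

end GSM
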